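/- Let (X,T) be a saturated dynamical system, B a real Banach space, Φ : X → B* continuous for the weak-star topology on B*, E ⊆ B, and α ∈ B*. If M_Φ(α;E) is nonempty, then the Bowen topological entropy of X_Φ(α;E) satisfies the variational principle h_top(X_Φ(α;E)) = sup{ h_μ : μ ∈ M_Φ(α;E) }. -/

import Mathlib

open MeasureTheory Filter Topology Set
open scoped ENNReal NNReal

/-!  General definitions: Bowen topological entropy (via covers by Bowen balls),
measure-theoretic (Kolmogorov–Sinai) entropy, generic points, saturated systems,
and the specification property. -/

variable {X : Type*}

/-- The Bowen ball of center `x`, order `n`, radius `ε` (for the metric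
`d_n(x,y) = max_{0 ≤ j < n} d(T^j x, T^j y)`). -/
def bowenBall [PseudoMetricSpace X] (T : X → X) (x : X) (n : ℕ) (ε : ℝ) : Set X :=
  {y | ∀ j < n, dist (T^[j] x) (T^[j] y) < ε}

/-- `H_n^s(Z,ε)`: infimum of `Σ_i exp(-s n_i)` over countable covers of `Z` by Bowen balls
`B_{n_i}(x_i,ε)` with all `n_i ≥ n`. -/
noncomputable def bowenH [PseudoMetricSpace X] (T : X → X) (Z : Set X) (s ε : ℝ) (n : ℕ) :
    ℝ≥0∞ :=
  ⨅ (C : Set (X × ℕ)) (_ : C.Countable) (_ : ∀ p ∈ C, n ≤ p.2)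
    (_ : Z ⊆ ⋃ p ∈ C, bowenBall T p.1 p.2 ε),
    ∑' p : C, ENNReal.ofReal (Real.exp (-s * ((p : X × ℕ).2 : ℝ)))

/-- `h_top(Z,ε)`: the critical exponent of `s ↦ H^s(Z,ε) = sup_n H_n^s(Z,ε)`. -/
noncomputable def bowenEntropyRes [PseudoMetricSpace X] (T : X → X) (Z : Set X) (ε : ℝ) :
    ℝ≥0∞ :=
  sInf ((fun s : ℝ≥0 => (s : ℝ≥0∞)) '' {s : ℝ≥0 | (⨆ n, bowenH T Z (s : ℝ) ε n) = 0})

/-- Bowen topological entropy of a subset `Z`: `h_top(Z) = lim_{ε → 0} h_top(Z,ε)`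
(the limit being a supremum by monotonicity in `ε`). -/
noncomputable def bowenEntropy [PseudoMetricSpace X] (T : X → X) (Z : Set X) : ℝ≥0∞ :=
  ⨆ (ε : ℝ) (_ : 0 < ε), bowenEntropyRes T Z ε

/-- Entropy of the partition `P ∨ T⁻¹P ∨ ⋯ ∨ T⁻⁽ⁿ⁻¹⁾P`, where a countable partition is
encoded as a function `P : X → ℕ`: it is the Shannon entropy of the map
`x ↦ (P x, P (T x), …, P (Tⁿ⁻¹ x))`. -/
noncomputable def partInfo [MeasurableSpace X] (T : X → X) (μ : Measure X) (P : X → ℕ)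
    (n : ℕ) : ℝ≥0∞ :=
  ∑' l : List ℕ, ENNReal.ofReal (Real.negMulLog
    ((μ ((fun x => (List.range n).map fun j => P (T^[j] x)) ⁻¹' {l})).toReal))

/-- Measure-theoretic (Kolmogorov–Sinai) entropy `h_μ(T)`: supremum over finite measurable
partitions `P` of `lim_n (1/n) H_μ(P ∨ T⁻¹P ∨ ⋯ ∨ T⁻⁽ⁿ⁻¹⁾P)` (the limit exists by
subadditivity, so it may be written as a `liminf`). -/
noncomputable def ksEntropy [MeasurableSpace X] (T : X → X) (μ : Measure X) : ℝ≥0∞ :=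
  ⨆ (P : X → ℕ) (_ : Measurable P) (_ : (Set.range P).Finite),
    Filter.atTop.liminf fun n : ℕ => partInfo T μ P n / (n : ℝ≥0∞)

/-- `x` is a generic point for `μ` : the empirical measures `(1/n) Σ_{j<n} δ_{T^j x}`
converge to `μ` in the weak-star topology, i.e. Birkhoff averages of every continuous
function converge to its integral. -/
def IsGeneric [TopologicalSpace X] [MeasurableSpace X] (T : X → X) (μ : Measure X)
    (x : X) : Prop :=
  ∀ f : C(X, ℝ), Tendsto (fun n : ℕ => (∑ j ∈ Finset.range n, f (T^[j] x)) / (n : ℝ))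
    atTop (𝓝 (∫ y, f y ∂μ))

/-- `μ ∈ V(x)` : `μ` is a weak-star limit point of the empirical measures of `x`. -/
def IsLimitMeasure [TopologicalSpace X] [MeasurableSpace X] (T : X → X) (x : X)
    (μ : Measure X) : Prop :=
  ∃ φ : ℕ → ℕ, StrictMono φ ∧ ∀ f : C(X, ℝ),
    Tendsto (fun m : ℕ => (∑ j ∈ Finset.range (φ m), f (T^[j] x)) / (φ m : ℝ))
      atTop (𝓝 (∫ y, f y ∂μ))

/-- A system is saturated if `h_top(G_μ) = h_μ` for every invariant Borel probability
measure `μ`. -/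
def Saturated [PseudoMetricSpace X] [MeasurableSpace X] (T : X → X) : Prop :=
  ∀ μ : Measure X, IsProbabilityMeasure μ → MeasurePreserving T μ μ →
    bowenEntropy T {x | IsGeneric T μ x} = ksEntropy T μ

/-- The specification property. -/
def SpecificationProperty [PseudoMetricSpace X] (T : X → X) : Prop :=
  ∀ ε : ℝ, 0 < ε → ∃ m : ℕ, 1 ≤ m ∧
    ∀ k : ℕ, 2 ≤ k → ∀ x : ℕ → X, ∀ a b : ℕ → ℕ,
      (∀ i < k, a i ≤ b i) →
      (∀ i, i + 1 < k → b i + m ≤ a (i + 1)) →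
      ∃ y : X, ∀ i < k, ∀ n ≤ b i - a i,
        dist (T^[a i + n] y) (T^[n] (x i)) < ε

/-! Every generic point of an invariant measure satisfying the constraints lies in the level set, so
saturation gives the lower bound. Conversely, the empirical measures of a point of the level set
have a limit measure; it is invariant and satisfies the constraints. The upper bound thus reduces to
Bowen's theorem: if each point of `Z` has a limit measure of entropy at most `a`, then the entropy
of `Z` is at most `a`.

For Bowen's theorem, let `μ` be a limit measure of `x` with `h_μ < s`. For some `m`, a fine
partition with `μ`-null boundaries has words of length `m` with distribution `p` of Shannon entropy
less than `s m`. Rational weights `w` slightly above `p e^c`, with `c < s m` above that entropy,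
satisfy `∑ w < e^{s m}` and `∑ p log w > 0`. Hence `log w` has positive averages along the orbit
infinitely often, and along one of the `m` residue classes of times the product of the weights of
successive words is infinitely often at least `1`. At most `(∑ w)^L` words of length `L` over the
alphabet of `m`-words have weight at least `1`, so the points with this property form a null set for
the exponent `s`, and countably many weights suffice for all `x`. -/

section BowenEntropy

variable [PseudoMetricSpace X] {T : X → X} {Y Z : Set X} {s ε : ℝ} {n : ℕ} {ι : Type*}

lemma mem_bowenBall_two_mul {x y z : X} (hx : x ∈ bowenBall T z n ε) (hy : y ∈ bowenBall T z n ε) :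
    y ∈ bowenBall T x n (2 * ε) := fun j hj =>
  (dist_triangle_left _ _ (T^[j] z)).trans_lt (by linarith [hx j hj, hy j hj])

lemma mem_bowenBall_add {x y : X} {r : ℕ} (hr : y ∈ bowenBall T x r ε)
    (hn : T^[r] y ∈ bowenBall T (T^[r] x) n ε) : y ∈ bowenBall T x (r + n) ε := by
  intro j hj
  obtain hjr | hrj := lt_or_ge j r
  · exact hr j hjr
  · obtain ⟨i, rfl⟩ := Nat.exists_eq_add_of_le' hrj
    simpa only [Function.iterate_add_apply] using hn i (by lia)

lemma mem_bowenBall_mul {x y : X} {m L : ℕ}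
    (h : ∀ l < L, T^[m * l] y ∈ bowenBall T (T^[m * l] x) m ε) : y ∈ bowenBall T x (m * L) ε := by
  induction L with
  | zero => exact fun j hj => absurd hj (by simp)
  | succ L ih =>
    rw [mul_add_one]
    exact mem_bowenBall_add (ih fun l hl => h l (hl.trans L.lt_succ_self)) (h L L.lt_succ_self)

/-- The points whose orbit follows the word `b` over the net `c`: at each time `j < m` it is
`δ`-close to `c (b j)`. -/
def cylinder (T : X → X) (c : ι → X) (δ : ℝ) (m : ℕ) (b : Fin m → ι) : Set X :=
  {x | ∀ j : Fin m, dist (T^[j] x) (c (b j)) < δ}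

lemma cylinder_subset_bowenBall {c : ι → X} {m : ℕ} {b : Fin m → ι} {x : X}
    (hx : x ∈ cylinder T c ε m b) : cylinder T c ε m b ⊆ bowenBall T x m (2 * ε) :=
  fun _ hy j hj => (dist_triangle_right _ _ (c (b ⟨j, hj⟩))).trans_lt
    (by linarith [hx ⟨j, hj⟩, hy ⟨j, hj⟩])

lemma bowenH_mono (h : Y ⊆ Z) : bowenH T Y s ε n ≤ bowenH T Z s ε n :=
  iInf_mono fun _ => iInf_mono fun _ => iInf_mono fun _ => iInf_mono' fun hZ =>
    ⟨h.trans hZ, le_rfl⟩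

lemma bowenEntropy_mono (h : Y ⊆ Z) : bowenEntropy T Y ≤ bowenEntropy T Z :=
  iSup₂_mono fun _ _ => sInf_le_sInf <| image_mono fun _ hs =>
    le_antisymm ((iSup_mono fun _ => bowenH_mono h).trans hs.le) zero_le

lemma bowenEntropyRes_le_of_bowenH_eq_zero {s : ℝ≥0} (h : ∀ n, bowenH T Z s ε n = 0) :
    bowenEntropyRes T Z ε ≤ s :=
  sInf_le ⟨s, by simp [h], rfl⟩

lemma bowenH_le_tsum_of_subset_iUnion_bowenBall [Countable ι] {x : ι → X} {N : ι → ℕ}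
    (hN : ∀ i, n ≤ N i) (hZ : Z ⊆ ⋃ i, bowenBall T (x i) (N i) ε) :
    bowenH T Z s ε n ≤ ∑' i, ENNReal.ofReal (Real.exp (-s * N i)) := by
  let p : ι → X × ℕ := fun i => (x i, N i)
  calc bowenH T Z s ε n
      ≤ ∑' q : range p, ENNReal.ofReal (Real.exp (-s * (q : X × ℕ).2)) :=
        iInf₂_le_of_le _ (countable_range p) <|
          iInf₂_le_of_le (forall_mem_range.2 hN) (by simpa [p] using hZ) le_rfl
    _ ≤ ∑' i, ENNReal.ofReal (Real.exp (-s * N i)) := by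
        simpa only [apply_rangeSplitting] using ENNReal.tsum_comp_le_tsum_of_injective
          (rangeSplitting_injective p) fun i => ENNReal.ofReal (Real.exp (-s * (p i).2))

lemma bowenH_le_tsum_of_subset_iUnion [Countable ι] {D : ι → Set X} {N : ι → ℕ}
    (hN : ∀ i, n ≤ N i) (hD : ∀ i, ∀ x ∈ D i, D i ⊆ bowenBall T x (N i) ε) (hZ : Z ⊆ ⋃ i, D i) :
    bowenH T Z s ε n ≤ ∑' i, ENNReal.ofReal (Real.exp (-s * N i)) := by
  have hcov : Z ⊆ ⋃ i : {i // (D i).Nonempty}, bowenBall T i.2.some (N i) ε := fun x hx => by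
    obtain ⟨i, hi⟩ := mem_iUnion.1 (hZ hx)
    exact mem_iUnion.2 ⟨⟨i, x, hi⟩, hD i _ (Nonempty.some_mem _) hi⟩
  exact (bowenH_le_tsum_of_subset_iUnion_bowenBall (N := fun i : {i // (D i).Nonempty} => N i)
    (fun i => hN i) hcov).trans
    (ENNReal.tsum_comp_le_tsum_of_injective Subtype.val_injective
      fun i => ENNReal.ofReal (Real.exp (-s * N i)))

lemma exists_cover_of_bowenH_lt {a : ℝ≥0∞} (h : bowenH T Z s ε n < a) :
    ∃ C : Set (X × ℕ), C.Countable ∧ (∀ p ∈ C, n ≤ p.2) ∧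
      (Z ⊆ ⋃ p ∈ C, bowenBall T p.1 p.2 ε) ∧
      ∑' p : C, ENNReal.ofReal (Real.exp (-s * (p : X × ℕ).2)) < a := by
  simpa only [bowenH, iInf_lt_iff, exists_prop] using h

lemma bowenH_iUnion_le [Countable ι] (Z : ι → Set X) :
    bowenH T (⋃ i, Z i) s ε n ≤ ∑' i, bowenH T (Z i) s ε n := by
  refine ENNReal.le_of_forall_pos_le_add fun δ hδ hfin => ?_
  obtain ⟨η, hη, hηδ⟩ := ENNReal.exists_pos_sum_of_countable' (ENNReal.coe_pos.2 hδ).ne' ι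
  choose C hC hCn hCZ hCη using fun i => exists_cover_of_bowenH_lt
    (ENNReal.lt_add_right (ENNReal.ne_top_of_tsum_ne_top hfin.ne i) (hη i).ne')
  have (i : ι) : Countable (C i) := (hC i).to_subtype
  have hcov : ⋃ i, Z i ⊆ ⋃ q : Σ i, C i, bowenBall T (q.2 : X × ℕ).1 (q.2 : X × ℕ).2 ε := by
    simpa only [iUnion_sigma, iUnion_coe_set] using iUnion_mono hCZ
  calc bowenH T (⋃ i, Z i) s ε n
      ≤ ∑' q : Σ i, C i, ENNReal.ofReal (Real.exp (-s * (q.2 : X × ℕ).2)) :=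
        bowenH_le_tsum_of_subset_iUnion_bowenBall (fun q => hCn _ _ q.2.2) hcov
    _ = ∑' i, ∑' p : C i, ENNReal.ofReal (Real.exp (-s * (p : X × ℕ).2)) :=
        ENNReal.tsum_sigma' _
    _ ≤ ∑' i, (bowenH T (Z i) s ε n + η i) := ENNReal.tsum_le_tsum fun i => (hCη i).le
    _ ≤ ∑' i, bowenH T (Z i) s ε n + δ := by rw [ENNReal.tsum_add]; gcongr

lemma bowenH_preimage_iterate_eq_zero [Finite ι] {c : ι → X} (hc : ∀ y, ∃ i, dist y (c i) < ε)
    (hs : 0 ≤ s) (h : bowenH T Z s ε n = 0) (r : ℕ) :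
    bowenH T (T^[r] ⁻¹' Z) s (2 * ε) n = 0 := by
  have := Fintype.ofFinite ι
  set K : ℝ≥0∞ := (Fintype.card (Fin r → ι) : ℝ≥0∞)
  refine le_antisymm (ENNReal.le_of_forall_pos_le_add fun δ hδ _ => ?_) zero_le
  obtain ⟨C, hC, hCn, hCZ, hCδ⟩ := exists_cover_of_bowenH_lt (h.trans_lt
    (ENNReal.div_pos (ENNReal.coe_pos.2 hδ).ne' (ENNReal.natCast_ne_top _) : 0 < δ / K))
  have := hC.to_subtype
  let D : C × (Fin r → ι) → Set X := fun q =>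
    cylinder T c ε r q.2 ∩ T^[r] ⁻¹' bowenBall T (q.1 : X × ℕ).1 (q.1 : X × ℕ).2 ε
  have hD : ∀ q, ∀ x ∈ D q, D q ⊆ bowenBall T x (r + (q.1 : X × ℕ).2) (2 * ε) :=
    fun q x hx y hy => mem_bowenBall_add (cylinder_subset_bowenBall hx.1 hy.1)
      (mem_bowenBall_two_mul hx.2 hy.2)
  have hcov : T^[r] ⁻¹' Z ⊆ ⋃ q, D q := fun x hx => by
    obtain ⟨p, hp, hxp⟩ := mem_iUnion₂.1 (hCZ hx)
    choose u hu using fun j : Fin r => hc (T^[j] x)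
    exact mem_iUnion.2 ⟨(⟨p, hp⟩, u), hu, hxp⟩
  calc bowenH T (T^[r] ⁻¹' Z) s (2 * ε) n
      ≤ ∑' q : C × (Fin r → ι),
          ENNReal.ofReal (Real.exp (-s * (r + (q.1 : X × ℕ).2 : ℕ))) :=
        bowenH_le_tsum_of_subset_iUnion (fun q => le_add_left (hCn _ q.1.2)) hD hcov
    _ ≤ ∑' q : C × (Fin r → ι), ENNReal.ofReal (Real.exp (-s * (q.1 : X × ℕ).2)) := by
        gcongr ∑' q, ENNReal.ofReal (Real.exp ?_) with q
        push_cast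
        nlinarith [r.cast_nonneg (α := ℝ)]
    _ = K * ∑' p : C, ENNReal.ofReal (Real.exp (-s * (p : X × ℕ).2)) := by
        rw [ENNReal.tsum_prod (f := fun (p : C) _ =>
          ENNReal.ofReal (Real.exp (-s * (p : X × ℕ).2)))]
        simp [K, ENNReal.tsum_mul_left]
    _ ≤ K * (δ / K) := by gcongr
    _ ≤ 0 + δ := by rw [zero_add]; exact ENNReal.mul_div_le

end BowenEntropy

section HeavySet

variable {A : Type*}

/-- The points that, for infinitely many `L`, admit a word `b` of length `L` and weight
`∏ l, w (b l)` at least `1` recording a visit to `D (b l)` at each of the times `m * l`. The sets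
`D a` may overlap, so a point may follow several words. -/
def heavySet (T : X → X) (m : ℕ) (D : A → Set X) (w : A → ℝ) : Set X :=
  {x | ∃ᶠ L in atTop, ∃ b : Fin L → A, (∀ l : Fin L, T^[m * l] x ∈ D (b l)) ∧ 1 ≤ ∏ l, w (b l)}

lemma heavySet_mono {T : X → X} {m : ℕ} {D D' : A → Set X} {w : A → ℝ} (h : ∀ a, D a ⊆ D' a) :
    heavySet T m D w ⊆ heavySet T m D' w := fun _ hx =>
  hx.mono fun _ ⟨b, hb, hw⟩ => ⟨b, fun l => h _ (hb l), hw⟩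

lemma mem_heavySet_of_frequently_sum_log_nonneg {T : X → X} {m : ℕ} {β : X → A} {w : A → ℝ}
    {x : X} (hw : ∀ a, 0 < w a)
    (h : ∃ᶠ L in atTop, 0 ≤ ∑ l ∈ Finset.range L, Real.log (w (β (T^[m * l] x)))) :
    x ∈ heavySet T m (fun a => β ⁻¹' {a}) w := by
  refine h.mono fun L hL => ⟨fun l => β (T^[m * l] x), fun _ => rfl, ?_⟩
  rw [← Real.log_nonneg_iff (Finset.prod_pos fun _ _ => hw _), Real.log_prod fun _ _ => (hw _).ne',
    Fin.sum_univ_eq_sum_range fun l => Real.log (w (β (T^[m * l] x)))]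
  exact hL

variable [Fintype A] {w : A → ℝ}

lemma card_one_le_prod_le_sum_pow (hw : ∀ a, 0 ≤ w a) (L : ℕ) :
    (Nat.card {b : Fin L → A // 1 ≤ ∏ l, w (b l)} : ℝ) ≤ (∑ a, w a) ^ L := by
  classical
  rw [Nat.card_eq_fintype_card, Fintype.card_subtype, Fintype.sum_pow, Finset.card_eq_sum_ones,
    Nat.cast_sum, Nat.cast_one]
  calc ∑ b : Fin L → A with 1 ≤ ∏ l, w (b l), (1 : ℝ)
      ≤ ∑ b : Fin L → A with 1 ≤ ∏ l, w (b l), ∏ l, w (b l) :=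
        Finset.sum_le_sum fun b hb => (Finset.mem_filter.1 hb).2
    _ ≤ ∑ b : Fin L → A, ∏ l, w (b l) :=
        Finset.sum_le_sum_of_subset_of_nonneg (Finset.filter_subset _ _) fun b _ _ =>
          Finset.prod_nonneg fun l _ => hw (b l)

lemma bowenH_heavySet_le_tsum [PseudoMetricSpace X] {T : X → X} {s ε : ℝ} {m n L₀ : ℕ}
    {D : A → Set X} (hD : ∀ a, ∀ x ∈ D a, D a ⊆ bowenBall T x m ε) (hw : ∀ a, 0 ≤ w a)
    (hn : n ≤ m * L₀) :
    bowenH T (heavySet T m D w) s ε n ≤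
      ∑' i : ℕ, ENNReal.ofReal (((∑ a, w a) * Real.exp (-(s * m))) ^ (i + L₀)) := by
  let I := Σ i : ℕ, {b : Fin (i + L₀) → A // 1 ≤ ∏ l, w (b l)}
  let E : I → Set X := fun q => {x | ∀ l : Fin (q.1 + L₀), T^[m * l] x ∈ D (q.2.1 l)}
  have hE : ∀ q, ∀ x ∈ E q, E q ⊆ bowenBall T x (m * (q.1 + L₀)) ε := fun q x hx y hy =>
    mem_bowenBall_mul fun l hl => hD _ _ (hx ⟨l, hl⟩) (hy ⟨l, hl⟩)
  have hcov : heavySet T m D w ⊆ ⋃ q, E q := fun x hx => by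
    obtain ⟨L, hL, b, hb, hbw⟩ := frequently_atTop.1 hx L₀
    obtain ⟨i, rfl⟩ := Nat.exists_eq_add_of_le' hL
    exact mem_iUnion.2 ⟨⟨i, b, hbw⟩, hb⟩
  calc bowenH T (heavySet T m D w) s ε n
      ≤ ∑' q : I, ENNReal.ofReal (Real.exp (-s * (m * (q.1 + L₀) : ℕ))) :=
        bowenH_le_tsum_of_subset_iUnion
          (fun q => hn.trans (Nat.mul_le_mul_left m (Nat.le_add_left _ _))) hE hcov
    _ = ∑' i : ℕ, ∑' _ : {b : Fin (i + L₀) → A // 1 ≤ ∏ l, w (b l)},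
          ENNReal.ofReal (Real.exp (-s * (m * (i + L₀) : ℕ))) := ENNReal.tsum_sigma' _
    _ ≤ ∑' i : ℕ, ENNReal.ofReal (((∑ a, w a) * Real.exp (-(s * m))) ^ (i + L₀)) := by
        refine ENNReal.tsum_le_tsum fun i => ?_
        rw [tsum_fintype, Finset.sum_const, nsmul_eq_mul, Finset.card_univ,
          ← Nat.card_eq_fintype_card, ← ENNReal.ofReal_natCast,
          ← ENNReal.ofReal_mul (Nat.cast_nonneg _), mul_pow, ← Real.exp_nat_mul]
        refine ENNReal.ofReal_le_ofReal ?_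
        have hexp : -s * (m * (i + L₀) : ℕ) = (i + L₀ : ℕ) * -(s * m) := by push_cast; ring
        rw [hexp]
        exact mul_le_mul_of_nonneg_right (card_one_le_prod_le_sum_pow hw _) (Real.exp_nonneg _)

lemma bowenH_heavySet_eq_zero [PseudoMetricSpace X] {T : X → X} {s ε : ℝ} {m : ℕ} (hm : 0 < m)
    {D : A → Set X} (hD : ∀ a, ∀ x ∈ D a, D a ⊆ bowenBall T x m ε) (hw : ∀ a, 0 ≤ w a)
    (hsum : ∑ a, w a < Real.exp (s * m)) (n : ℕ) :
    bowenH T (heavySet T m D w) s ε n = 0 := by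
  set ρ : ℝ := (∑ a, w a) * Real.exp (-(s * m)) with hρ
  have hρ0 : 0 ≤ ρ := mul_nonneg (Finset.sum_nonneg fun a _ => hw a) (Real.exp_nonneg _)
  have hρ1 : ρ < 1 := by
    rwa [hρ, Real.exp_neg, ← div_eq_mul_inv, div_lt_one (Real.exp_pos _)]
  have htail := ENNReal.tendsto_sum_nat_add (fun L => ENNReal.ofReal (ρ ^ L))
    (summable_geometric_of_lt_one hρ0 hρ1).tsum_ofReal_ne_top
  refine le_antisymm (ge_of_tendsto htail ?_) zero_le
  filter_upwards [eventually_ge_atTop n] with L₀ hL₀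
  exact bowenH_heavySet_le_tsum hD hw (hL₀.trans (Nat.le_mul_of_pos_left L₀ hm))

end HeavySet

section Sequences

lemma exists_rat_weight {A : Type*} [Fintype A] {p : A → ℝ} (hp : ∀ a, 0 ≤ p a)
    (hp1 : ∑ a, p a = 1) {d : ℝ} (hd : ∑ a, Real.negMulLog (p a) < d) :
    ∃ w : A → ℚ, (∀ a, 0 < w a) ∧ ∑ a, (w a : ℝ) < Real.exp d ∧
      0 < ∑ a, p a * Real.log (w a) := by
  have : Nonempty A := by
    by_contra hA
    simp [not_nonempty_iff.1 hA] at hp1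
  obtain ⟨c, hc, hcd⟩ := exists_between hd
  set δ : ℝ := (Real.exp d - Real.exp c) / Fintype.card A
  have hδ : 0 < δ := div_pos (sub_pos.2 (Real.exp_lt_exp.2 hcd)) (by simp [Fintype.card_pos])
  choose w hpw hwp using fun a => exists_rat_btwn (lt_add_of_pos_right (p a * Real.exp c) hδ)
  have hw (a : A) : 0 < (w a : ℝ) := (mul_nonneg (hp a) (Real.exp_nonneg c)).trans_lt (hpw a)
  have hlog (a : A) : p a * c - Real.negMulLog (p a) ≤ p a * Real.log (w a) := by
    obtain h0 | hpos := (hp a).eq_or_lt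
    · simp [← h0]
    · have h := Real.log_le_log (mul_pos hpos (Real.exp_pos c)) (hpw a).le
      rw [Real.log_mul hpos.ne' (Real.exp_ne_zero c), Real.log_exp] at h
      rw [Real.negMulLog]
      linarith [mul_le_mul_of_nonneg_left h hpos.le]
  refine ⟨w, fun a => by exact_mod_cast hw a, ?_, ?_⟩
  · calc ∑ a, (w a : ℝ) < ∑ a, (p a * Real.exp c + δ) :=
          Finset.sum_lt_sum_of_nonempty Finset.univ_nonempty fun a _ => hwp a
      _ = Real.exp d := by
          rw [Finset.sum_add_distrib, ← Finset.sum_mul, hp1, Finset.sum_const, Finset.card_univ,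
            nsmul_eq_mul, mul_div_cancel₀ _ (by simp)]
          ring
  · calc 0 < ∑ a, (p a * c - Real.negMulLog (p a)) := by
          rw [Finset.sum_sub_distrib, ← Finset.sum_mul, hp1, one_mul]
          exact sub_pos.2 hc
      _ ≤ ∑ a, p a * Real.log (w a) := Finset.sum_le_sum fun a _ => hlog a

lemma sum_range_mul_eq_sum_phases {M : Type*} [AddCommMonoid M] (f : ℕ → M) (m L : ℕ) :
    ∑ i ∈ Finset.range (m * L), f i = ∑ r : Fin m, ∑ l ∈ Finset.range L, f (r + m * l) := by
  rw [Fin.sum_univ_eq_sum_range fun r => ∑ l ∈ Finset.range L, f (r + m * l)]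
  induction L with
  | zero => simp
  | succ L ih =>
    rw [mul_add_one, Finset.sum_range_add, ih]
    simp only [Finset.sum_range_succ, Finset.sum_add_distrib, add_comm]

lemma exists_phase_frequently_sum_nonneg {f : ℕ → ℝ} {K a : ℝ} (hf : ∀ i, |f i| ≤ K) (ha : 0 < a)
    (h : ∃ᶠ n : ℕ in atTop, a * n < ∑ i ∈ Finset.range n, f i) {m : ℕ} (hm : 0 < m) :
    ∃ r : Fin m, ∃ᶠ L in atTop, 0 ≤ ∑ l ∈ Finset.range L, f (r + m * l) := by
  by_contra! hneg
  have hdiv : Tendsto (fun n => n / m) atTop atTop := Nat.tendsto_div_const_atTop hm.ne'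
  have hlarge : ∀ᶠ n : ℕ in atTop, m * K ≤ a * n :=
    (tendsto_natCast_atTop_atTop.const_mul_atTop ha).eventually_ge_atTop _
  refine h ?_
  filter_upwards [hdiv.eventually (eventually_all.2 hneg), hlarge] with n hphase hn
  have hK : 0 ≤ K := (abs_nonneg _).trans (hf 0)
  have hmain : ∑ i ∈ Finset.range (m * (n / m)), f i ≤ 0 := by
    rw [sum_range_mul_eq_sum_phases]
    exact Finset.sum_nonpos fun r _ => (hphase r).le
  have hrest : ∑ i ∈ Finset.range (n % m), f (m * (n / m) + i) ≤ m * K :=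
    calc ∑ i ∈ Finset.range (n % m), f (m * (n / m) + i)
        ≤ ∑ _i ∈ Finset.range (n % m), K :=
          Finset.sum_le_sum fun i _ => (abs_le.1 (hf _)).2
      _ = (n % m : ℕ) * K := by simp
      _ ≤ m * K := by gcongr; exact (Nat.mod_lt n hm).le
  rw [not_lt, ← Nat.div_add_mod n m, Finset.sum_range_add, Nat.div_add_mod]
  linarith

end Sequences

section Itinerary

variable {T : X → X} {ι : Type*} {π : X → ι}

/-- The first `m` symbols of the `π`-coding of the orbit of `x`; its fibres are the atoms of the
join `π ∨ T⁻¹π ∨ ⋯ ∨ T⁻⁽ᵐ⁻¹⁾π` of the partition into fibres of `π`. -/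
def itinerary (T : X → X) (π : X → ι) (m : ℕ) (x : X) : Fin m → ι := fun j => π (T^[j] x)

lemma itinerary_preimage_singleton (m : ℕ) (b : Fin m → ι) :
    itinerary T π m ⁻¹' {b} = ⋂ j : Fin m, T^[j] ⁻¹' (π ⁻¹' {b j}) := by
  ext x
  simp [itinerary, funext_iff]

lemma itinerary_preimage_subset_cylinder [PseudoMetricSpace X] {c : ι → X} {δ : ℝ}
    (hπ : ∀ x, dist x (c (π x)) < δ) {m : ℕ} (b : Fin m → ι) :
    itinerary T π m ⁻¹' {b} ⊆ cylinder T c δ m b := by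
  rintro x rfl j
  exact hπ _

lemma measurable_itinerary [MeasurableSpace X] [MeasurableSpace ι] (hT : Measurable T)
    (hπ : Measurable π) (m : ℕ) : Measurable (itinerary T π m) :=
  measurable_pi_lambda _ fun j => hπ.comp (hT.iterate j)

lemma sum_negMulLog_itinerary_le_partInfo [Fintype ι] [MeasurableSpace X] (μ : Measure X)
    {e : ι → ℕ} (he : Function.Injective e) (m : ℕ) :
    ∑ b : Fin m → ι, ENNReal.ofReal (Real.negMulLog (μ.real (itinerary T π m ⁻¹' {b}))) ≤
      partInfo T μ (e ∘ π) m := by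
  let code : (Fin m → ι) → List ℕ := fun b => List.ofFn (e ∘ b)
  have hcode : Function.Injective code := List.ofFn_injective.comp he.comp_left
  have hfibre (b : Fin m → ι) :
      (fun x => (List.range m).map fun j => (e ∘ π) (T^[j] x)) ⁻¹' {code b} =
        itinerary T π m ⁻¹' {b} := by
    ext x
    have hlist : (List.range m).map (fun j => (e ∘ π) (T^[j] x)) = code (itinerary T π m x) :=
      List.ext_getElem (by simp [code]) (by simp [code, itinerary])
    simp only [mem_preimage, mem_singleton_iff, hlist, hcode.eq_iff]
  simpa only [hfibre, tsum_fintype, partInfo, Measure.real] using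
    ENNReal.tsum_comp_le_tsum_of_injective hcode fun l => ENNReal.ofReal (Real.negMulLog
      (μ.real ((fun x => (List.range m).map fun j => (e ∘ π) (T^[j] x)) ⁻¹' {l})))

lemma exists_sum_negMulLog_itinerary_lt [Fintype ι] [MeasurableSpace ι] [DiscreteMeasurableSpace ι]
    [MeasurableSpace X] {μ : Measure X} [IsProbabilityMeasure μ] (hπ : Measurable π) {t : ℝ≥0}
    (h : ksEntropy T μ < t) :
    ∃ m : ℕ, 0 < m ∧
      ∑ b : Fin m → ι, Real.negMulLog (μ.real (itinerary T π m ⁻¹' {b})) < t * m := by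
  let e : ι → ℕ := fun i => Fintype.equivFin ι i
  have he : Function.Injective e := Fin.val_injective.comp (Fintype.equivFin ι).injective
  have hliminf : liminf (fun n : ℕ => partInfo T μ (e ∘ π) n / n) atTop < t := by
    refine lt_of_le_of_lt ?_ h
    exact le_iSup_of_le (e ∘ π) <| le_iSup₂_of_le (Measurable.of_discrete.comp hπ)
      (toFinite (range e) |>.subset (range_comp_subset_range π e)) le_rfl
  obtain ⟨m, hlt, hm⟩ := ((frequently_lt_of_liminf_lt (by isBoundedDefault) hliminf).and_eventually
    (eventually_gt_atTop 0)).exists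
  have hpart : partInfo T μ (e ∘ π) m < t * m :=
    (ENNReal.div_lt_iff (Or.inl (by simp [hm.ne'])) (Or.inl (by simp))).1 hlt
  have hnonneg (b : Fin m → ι) : 0 ≤ Real.negMulLog (μ.real (itinerary T π m ⁻¹' {b})) :=
    Real.negMulLog_nonneg measureReal_nonneg measureReal_le_one
  have hsum := (sum_negMulLog_itinerary_le_partInfo μ he m).trans_lt hpart
  rw [← ENNReal.ofReal_sum_of_nonneg fun b _ => hnonneg b, ← ENNReal.coe_natCast,
    ← ENNReal.coe_mul] at hsum
  refine ⟨m, hm, ?_⟩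
  simpa using (ENNReal.ofReal_lt_iff_lt_toReal (Finset.sum_nonneg fun b _ => hnonneg b)
    ENNReal.coe_ne_top).1 hsum

end Itinerary

section NullFrontier

variable {ι : Type*}

lemma frontier_iInter_subset [TopologicalSpace X] [Finite ι] (s : ι → Set X) :
    frontier (⋂ i, s i) ⊆ ⋃ i, frontier (s i) := by
  rintro x ⟨hcl, hint⟩
  rw [interior_iInter_of_finite, mem_iInter, not_forall] at hint
  obtain ⟨i, hi⟩ := hint
  exact mem_iUnion.2 ⟨i, closure_mono (iInter_subset s i) hcl, hi⟩

variable [MeasurableSpace X] {μ : Measure X}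

lemma exists_partition_null_frontier_of_iUnion_eq_univ [TopologicalSpace X] [Countable ι]
    [LinearOrder ι] [LocallyFiniteOrderBot ι] [MeasurableSpace ι] {U : ι → Set X}
    (hmeas : ∀ i, MeasurableSet (U i)) (hcov : ⋃ i, U i = univ)
    (hfr : ∀ i, μ (frontier (U i)) = 0) :
    ∃ π : X → ι, Measurable π ∧ (∀ x, x ∈ U (π x)) ∧ ∀ i, μ (frontier (π ⁻¹' {i})) = 0 := by
  rw [← iUnion_disjointed] at hcov
  choose π hπ using iUnion_eq_univ_iff.1 hcov
  have hfibre (i : ι) : π ⁻¹' {i} = disjointed U i := by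
    ext x
    refine ⟨fun hx => hx ▸ hπ x, fun hx => ?_⟩
    by_contra hne
    exact disjoint_left.1 (disjoint_disjointed U hne) (hπ x) hx
  refine ⟨π, measurable_to_countable' fun i => ?_, fun x => disjointed_subset U _ (hπ x),
    fun i => ?_⟩
  · rw [hfibre]
    exact disjointedRec (p := MeasurableSet) (fun _ j hs => hs.diff (hmeas j)) (hmeas i)
  · rw [hfibre]
    have hcompl (j : ι) : μ (frontier (U j)ᶜ) = 0 := by rw [frontier_compl, hfr]
    exact disjointedRec (p := fun s => μ (frontier s) = 0)
      (fun _ j hs => null_frontier_inter hs (hcompl j)) (hfr i)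

lemma exists_partition_null_frontier_dist_lt [PseudoMetricSpace X] [OpensMeasurableSpace X]
    [SFinite μ] [Countable ι] [LinearOrder ι] [LocallyFiniteOrderBot ι] [MeasurableSpace ι]
    {c : ι → X} {a ε : ℝ} (haε : a < ε) (hc : ∀ x, ∃ i, dist x (c i) < a) :
    ∃ π : X → ι, Measurable π ∧ (∀ x, dist x (c (π x)) < ε) ∧
      ∀ i, μ (frontier (π ⁻¹' {i})) = 0 := by
  choose ρ hρ hfr using fun i => exists_null_frontier_thickening μ {c i} haε
  simp only [Metric.thickening_singleton] at hfr
  have hcov : ⋃ i, Metric.ball (c i) (ρ i) = univ := iUnion_eq_univ_iff.2 fun x =>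
    (hc x).imp fun i hi => hi.trans (hρ i).1
  obtain ⟨π, hπ, hball, hfib⟩ := exists_partition_null_frontier_of_iUnion_eq_univ
    (fun _ => measurableSet_ball) hcov hfr
  exact ⟨π, hπ, fun x => (hball x).trans (hρ _).2, hfib⟩

lemma null_frontier_itinerary_preimage [TopologicalSpace X] [OpensMeasurableSpace X] {T : X → X}
    {π : X → ι} (hT : Continuous T) (hinv : MeasurePreserving T μ μ)
    (hπ : ∀ i, μ (frontier (π ⁻¹' {i})) = 0) (m : ℕ) (b : Fin m → ι) :
    μ (frontier (itinerary T π m ⁻¹' {b})) = 0 := by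
  rw [itinerary_preimage_singleton]
  refine measure_mono_null (frontier_iInter_subset _) (measure_iUnion_null fun j => ?_)
  refine measure_mono_null ((hT.iterate j).frontier_preimage_subset _) ?_
  rw [(hinv.iterate j).measure_preimage isClosed_frontier.nullMeasurableSet]
  exact hπ _

end NullFrontier

section WeakConvergence

variable {A : Type*} [MeasurableSpace A] [MeasurableSingletonClass A] [MeasurableSpace X]
  {β : X → A}

lemma integral_comp_eq_sum_measureReal_preimage [Fintype A] (hβ : Measurable β)
    (μ : Measure X) [IsFiniteMeasure μ] (g : A → ℝ) :
    ∫ x, g (β x) ∂μ = ∑ a, μ.real (β ⁻¹' {a}) * g a := by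
  rw [← integral_map hβ.aemeasurable (measurable_of_finite g).aestronglyMeasurable,
    integral_fintype .of_finite]
  simp only [smul_eq_mul, map_measureReal_apply hβ (measurableSet_singleton _)]

lemma tendsto_integral_comp_of_null_frontier [Finite A] [TopologicalSpace X]
    [OpensMeasurableSpace X] [HasOuterApproxClosed X] {γ : Type*} {l : Filter γ}
    {ν : γ → ProbabilityMeasure X} {μ : ProbabilityMeasure X} (hν : Tendsto ν l (𝓝 μ))
    (hβ : Measurable β) (hfr : ∀ a, (μ : Measure X) (frontier (β ⁻¹' {a})) = 0) (g : A → ℝ) :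
    Tendsto (fun i => ∫ x, g (β x) ∂(ν i : Measure X)) l (𝓝 (∫ x, g (β x) ∂(μ : Measure X))) := by
  have := Fintype.ofFinite A
  simp only [integral_comp_eq_sum_measureReal_preimage hβ]
  exact tendsto_finsetSum _ fun a _ => ((ENNReal.tendsto_toReal (measure_ne_top _ _)).comp
    (ProbabilityMeasure.tendsto_measure_of_null_frontier_of_tendsto' hν (hfr a))).mul_const _

end WeakConvergence

section LimitMeasure

variable {T : X → X} {x : X}

lemma birkhoffAverage_eq_sum_div (T : X → X) (f : X → ℝ) (n : ℕ) (x : X) :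
    birkhoffAverage ℝ T f n x = (∑ j ∈ Finset.range n, f (T^[j] x)) / n :=
  (div_eq_inv_mul _ _).symm

lemma norm_birkhoffAverage_le {E : Type*} [NormedAddCommGroup E] [NormedSpace ℝ E] {f : X → E}
    {K : ℝ} (hf : ∀ y, ‖f y‖ ≤ K) (T : X → X) (n : ℕ) (x : X) :
    ‖birkhoffAverage ℝ T f n x‖ ≤ K := by
  have hK : 0 ≤ K := (norm_nonneg _).trans (hf x)
  calc ‖birkhoffAverage ℝ T f n x‖
      = (n : ℝ)⁻¹ * ‖∑ j ∈ Finset.range n, f (T^[j] x)‖ := by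
        simp [birkhoffAverage, birkhoffSum, norm_smul]
    _ ≤ (n : ℝ)⁻¹ * (n * K) := by
        gcongr
        simpa using norm_sum_le_of_le (Finset.range n) fun j _ => hf (T^[j] x)
    _ ≤ K := inv_mul_le_of_le_mul₀ n.cast_nonneg hK le_rfl

variable [MeasurableSpace X]

/-- The empirical measure of the first `n + 1` points of the orbit of `x`; the shift by one
avoids the empty orbit segment. -/
noncomputable def empiricalMeasure (T : X → X) (x : X) (n : ℕ) : ProbabilityMeasure X :=
  ⟨birkhoffAverage ℝ≥0 T Measure.dirac (n + 1) x, ⟨by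
    simp only [birkhoffAverage, birkhoffSum, Measure.smul_apply, Measure.coe_finsetSum,
      Finset.sum_apply, measure_univ, Finset.sum_const, Finset.card_range, nsmul_one]
    rw [ENNReal.smul_def, smul_eq_mul, ← ENNReal.coe_natCast, ← ENNReal.coe_mul,
      inv_mul_cancel₀ (by positivity), ENNReal.coe_one]⟩⟩

lemma integral_empiricalMeasure {f : X → ℝ} (hf : StronglyMeasurable f) (T : X → X) (x : X)
    (n : ℕ) : ∫ y, f y ∂(empiricalMeasure T x n : Measure X) = birkhoffAverage ℝ T f (n + 1) x := by
  change ∫ y, f y ∂(((n + 1 : ℕ) : ℝ≥0)⁻¹ • ∑ j ∈ Finset.range (n + 1),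
    Measure.dirac (T^[j] x)) = _
  rw [integral_smul_nnreal_measure,
    integral_finsetSum_measure fun _ _ => integrable_dirac' hf (by simp)]
  simp [birkhoffAverage, birkhoffSum, integral_dirac' _ _ hf, NNReal.smul_def]

variable [TopologicalSpace X]

lemma isLimitMeasure_iff_tendsto_birkhoffAverage {μ : Measure X} :
    IsLimitMeasure T x μ ↔ ∃ φ : ℕ → ℕ, StrictMono φ ∧ ∀ f : C(X, ℝ),
      Tendsto (fun k => birkhoffAverage ℝ T f (φ k) x) atTop (𝓝 (∫ y, f y ∂μ)) := by
  simp only [IsLimitMeasure, birkhoffAverage_eq_sum_div]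

lemma IsGeneric.tendsto_birkhoffAverage {μ : Measure X} (h : IsGeneric T μ x) (f : C(X, ℝ)) :
    Tendsto (fun n => birkhoffAverage ℝ T f n x) atTop (𝓝 (∫ y, f y ∂μ)) := by
  simpa only [birkhoffAverage_eq_sum_div] using h f

lemma IsLimitMeasure.isProbabilityMeasure {μ : Measure X} (h : IsLimitMeasure T x μ) :
    IsProbabilityMeasure μ := by
  obtain ⟨φ, hφ, hlim⟩ := isLimitMeasure_iff_tendsto_birkhoffAverage.1 h
  have hone : ∀ᶠ k in atTop, birkhoffAverage ℝ T (1 : C(X, ℝ)) (φ k) x = 1 := by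
    filter_upwards [hφ.tendsto_atTop.eventually_ne_atTop 0] with k hk
    simp [birkhoffAverage, birkhoffSum, hk]
  have hmass := tendsto_nhds_unique ((hlim 1).congr' hone) tendsto_const_nhds
  exact isProbabilityMeasure_iff_real.2 (by simpa using hmass)

lemma IsLimitMeasure.integral_le_limsup [CompactSpace X] {μ : Measure X}
    (h : IsLimitMeasure T x μ) (f : C(X, ℝ)) :
    ∫ y, f y ∂μ ≤ limsup (fun n => birkhoffAverage ℝ T f n x) atTop := by
  obtain ⟨φ, hφ, hlim⟩ := isLimitMeasure_iff_tendsto_birkhoffAverage.1 h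
  have hbound (n : ℕ) : |birkhoffAverage ℝ T f n x| ≤ ‖f‖ :=
    norm_birkhoffAverage_le f.norm_coe_le_norm T n x
  rw [← (hlim f).limsup_eq]
  exact hφ.tendsto_atTop.limsup_comp_le_limsup (u := fun n => birkhoffAverage ℝ T f n x)
    (isCoboundedUnder_le_of_le _ fun n => (abs_le.1 (hbound n)).1)
    (isBoundedUnder_of ⟨‖f‖, fun n => (abs_le.1 (hbound n)).2⟩)

lemma IsLimitMeasure.measurePreserving [HasOuterApproxClosed X] [BorelSpace X] {μ : Measure X}
    (h : IsLimitMeasure T x μ) (hT : Continuous T) : MeasurePreserving T μ μ := by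
  have := h.isProbabilityMeasure
  have := Measure.isProbabilityMeasure_map (μ := μ) hT.measurable.aemeasurable
  obtain ⟨φ, hφ, hlim⟩ := isLimitMeasure_iff_tendsto_birkhoffAverage.1 h
  refine ⟨hT.measurable, ext_of_forall_integral_eq_of_IsFiniteMeasure fun f => ?_⟩
  rw [integral_map hT.measurable.aemeasurable f.continuous.aestronglyMeasurable]
  have hcomp (n : ℕ) : birkhoffAverage ℝ T (f ∘ T) n x = birkhoffAverage ℝ T f n (T x) := by
    simp [birkhoffAverage, birkhoffSum, ← Function.iterate_succ_apply,
      Function.iterate_succ_apply']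
  have hdiff := (tendsto_birkhoffAverage_apply_sub_birkhoffAverage' ℝ f.isBounded_range T x).comp
    hφ.tendsto_atTop
  refine sub_eq_zero.1 (tendsto_nhds_unique ((hlim (f.toContinuousMap.comp ⟨T, hT⟩)).sub
    (hlim f.toContinuousMap)) (hdiff.congr fun k => ?_))
  exact congrArg (· - _) (hcomp (φ k)).symm

lemma isLimitMeasure_iff_tendsto_empiricalMeasure [CompactSpace X] [OpensMeasurableSpace X]
    {μ : ProbabilityMeasure X} :
    IsLimitMeasure T x μ ↔
      ∃ φ : ℕ → ℕ, StrictMono φ ∧ Tendsto (empiricalMeasure T x ∘ φ) atTop (𝓝 μ) := by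
  simp only [ProbabilityMeasure.tendsto_iff_forall_integral_tendsto, Function.comp_apply,
    isLimitMeasure_iff_tendsto_birkhoffAverage]
  constructor
  · rintro ⟨φ, hφ, hlim⟩
    have hpos (k : ℕ) : 0 < φ (k + 1) := (Nat.zero_le _).trans_lt (hφ k.lt_succ_self)
    refine ⟨fun k => φ (k + 1) - 1, fun k l hkl => ?_, fun f => ?_⟩
    · have := hφ (Nat.add_lt_add_right hkl 1)
      have := hpos k
      lia
    · simp only [integral_empiricalMeasure f.continuous.stronglyMeasurable,
        Nat.sub_add_cancel (hpos _)]
      exact (tendsto_add_atTop_iff_nat 1).2 (hlim f.toContinuousMap)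
  · rintro ⟨φ, hφ, hlim⟩
    refine ⟨fun k => φ k + 1, hφ.add_const 1, fun f => ?_⟩
    refine (hlim (.mkOfCompact f)).congr fun k => ?_
    exact integral_empiricalMeasure f.continuous.stronglyMeasurable T x (φ k)

lemma exists_isLimitMeasure [CompactSpace X] [TopologicalSpace.MetrizableSpace X] [BorelSpace X]
    (T : X → X) (x : X) : ∃ μ : Measure X, IsLimitMeasure T x μ := by
  obtain ⟨μ, φ, hφ, hlim⟩ := CompactSpace.tendsto_subseq (empiricalMeasure T x)
  exact ⟨μ, isLimitMeasure_iff_tendsto_empiricalMeasure.2 ⟨φ, hφ, hlim⟩⟩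

lemma IsLimitMeasure.frequently_lt_birkhoffAverage [CompactSpace X] [HasOuterApproxClosed X]
    [OpensMeasurableSpace X] {A : Type*} [Finite A] [MeasurableSpace A]
    [MeasurableSingletonClass A] {β : X → A} {μ : Measure X} (h : IsLimitMeasure T x μ)
    (hβ : Measurable β) (hfr : ∀ a, μ (frontier (β ⁻¹' {a})) = 0) {g : A → ℝ} {c : ℝ}
    (hc : c < ∫ y, g (β y) ∂μ) : ∃ᶠ n in atTop, c < birkhoffAverage ℝ T (g ∘ β) n x := by
  obtain ⟨μ, rfl⟩ : ∃ ν : ProbabilityMeasure X, ν = μ := ⟨⟨μ, h.isProbabilityMeasure⟩, rfl⟩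
  obtain ⟨φ, hφ, hlim⟩ := isLimitMeasure_iff_tendsto_empiricalMeasure.1 h
  have hint := tendsto_integral_comp_of_null_frontier hlim hβ hfr g
  have hgβ : StronglyMeasurable fun y => g (β y) :=
    ((measurable_of_finite g).comp hβ).stronglyMeasurable
  simp only [Function.comp_apply, integral_empiricalMeasure hgβ] at hint
  exact ((tendsto_add_atTop_nat 1).comp hφ.tendsto_atTop).frequently
    (hint.eventually_const_lt hc).frequently

end LimitMeasure

section Bowen

lemma IsLimitMeasure.exists_iterate_mem_heavySet [TopologicalSpace X] [CompactSpace X]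
    [HasOuterApproxClosed X] [MeasurableSpace X] [BorelSpace X] {T : X → X} (hT : Continuous T)
    {x : X} {μ : Measure X} (hμ : IsLimitMeasure T x μ) {ι : Type*} [Fintype ι]
    [MeasurableSpace ι] [DiscreteMeasurableSpace ι] {π : X → ι} (hπ : Measurable π)
    (hfr : ∀ i, μ (frontier (π ⁻¹' {i})) = 0) {s : ℝ≥0} (hs : ksEntropy T μ < s) :
    ∃ m : ℕ, 0 < m ∧ ∃ w : (Fin m → ι) → ℚ, (∀ b, 0 ≤ w b) ∧
      ∑ b, (w b : ℝ) < Real.exp (s * m) ∧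
      ∃ r, T^[r] x ∈ heavySet T m (fun b => itinerary T π m ⁻¹' {b}) fun b => (w b : ℝ) := by
  have := hμ.isProbabilityMeasure
  obtain ⟨m, hm, hH⟩ := exists_sum_negMulLog_itinerary_lt hπ hs
  have hβ := measurable_itinerary hT.measurable hπ m
  set β := itinerary T π m
  have hp1 : ∑ b, μ.real (β ⁻¹' {b}) = 1 := by
    simpa using (integral_comp_eq_sum_measureReal_preimage hβ μ 1).symm
  obtain ⟨w, hw, hsum, hpos⟩ := exists_rat_weight (fun _ => measureReal_nonneg) hp1 hH
  let g : (Fin m → ι) → ℝ := fun b => Real.log (w b)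
  have hint : 0 < ∫ y, g (β y) ∂μ := by rwa [integral_comp_eq_sum_measureReal_preimage hβ]
  obtain ⟨a, ha, hav⟩ := exists_between hint
  have hfreq : ∃ᶠ n : ℕ in atTop, a * n < ∑ i ∈ Finset.range n, g (β (T^[i] x)) := by
    refine ((hμ.frequently_lt_birkhoffAverage hβ (null_frontier_itinerary_preimage hT
      (hμ.measurePreserving hT) hfr m) hav).and_eventually (eventually_gt_atTop 0)).mono ?_
    rintro n ⟨hn, hn0⟩
    rwa [birkhoffAverage_eq_sum_div, lt_div_iff₀ (Nat.cast_pos.2 hn0)] at hn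
  obtain ⟨K, hK⟩ := (finite_range fun b => |g b|).bddAbove
  obtain ⟨r, hr⟩ := exists_phase_frequently_sum_nonneg (fun i => hK (mem_range_self _)) ha hfreq hm
  refine ⟨m, hm, w, fun b => (hw b).le, hsum, r,
    mem_heavySet_of_frequently_sum_log_nonneg (fun b => Rat.cast_pos.2 (hw b)) ?_⟩
  simpa only [← Function.iterate_add_apply, add_comm] using hr

lemma exists_fin_forall_exists_dist_lt [PseudoMetricSpace X] [CompactSpace X] {δ : ℝ}
    (hδ : 0 < δ) : ∃ (k : ℕ) (c : Fin k → X), ∀ x, ∃ i, dist x (c i) < δ := by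
  obtain ⟨S, -, hS, hcov⟩ := finite_cover_balls_of_compact (isCompact_univ (X := X)) hδ
  obtain ⟨k, c, -, rfl⟩ := hS.fin_param
  exact ⟨k, c, fun x => by simpa using hcov (mem_univ x)⟩

variable [PseudoMetricSpace X] [CompactSpace X] [MeasurableSpace X] [BorelSpace X] {T : X → X}

lemma bowenEntropyRes_le_of_forall_exists_isLimitMeasure (hT : Continuous T) {Z : Set X} {s : ℝ≥0}
    (h : ∀ x ∈ Z, ∃ μ, IsLimitMeasure T x μ ∧ ksEntropy T μ < s) {ε : ℝ} (hε : 0 < ε) :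
    bowenEntropyRes T Z ε ≤ s := by
  obtain ⟨k, c, hc⟩ := exists_fin_forall_exists_dist_lt (X := X) (by positivity : 0 < ε / 8)
  -- The partition given by a limit measure may vary with the point, but the cylinders over a fixed
  -- net and the rational weights range over a countable family.
  let J := {q : Σ m, ((Fin m → Fin k) → ℚ) × ℕ // 0 < q.1 ∧ (∀ b, 0 ≤ q.2.1 b) ∧
    ∑ b, (q.2.1 b : ℝ) < Real.exp (s * q.1)}
  let W : J → Set X := fun q => T^[q.1.2.2] ⁻¹'
    heavySet T q.1.1 (cylinder T c (ε / 4) q.1.1) fun b => (q.1.2.1 b : ℝ)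
  have hcov : Z ⊆ ⋃ q, W q := fun x hx => by
    obtain ⟨μ, hμ, hμs⟩ := h x hx
    have := hμ.isProbabilityMeasure
    obtain ⟨π, hπ, hπc, hfr⟩ := exists_partition_null_frontier_dist_lt (μ := μ)
      (by linarith : ε / 8 < ε / 4) hc
    obtain ⟨m, hm, w, hw, hsum, r, hr⟩ := hμ.exists_iterate_mem_heavySet hT hπ hfr hμs
    exact mem_iUnion.2 ⟨⟨⟨m, w, r⟩, hm, hw, hsum⟩,
      heavySet_mono (itinerary_preimage_subset_cylinder hπc) hr⟩
  have hnull (n : ℕ) (q : J) : bowenH T (W q) s ε n = 0 := by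
    obtain ⟨⟨m, w, r⟩, hm, hw, hsum⟩ := q
    have hheavy := bowenH_heavySet_eq_zero hm (T := T) (D := cylinder T c (ε / 4) m)
      (fun _ _ => cylinder_subset_bowenBall) (fun b => Rat.cast_nonneg.2 (hw b)) hsum n
    rw [show ε = 2 * (2 * (ε / 4)) by ring]
    exact bowenH_preimage_iterate_eq_zero (fun y => (hc y).imp fun i hi => hi.trans (by linarith))
      s.coe_nonneg hheavy r
  refine bowenEntropyRes_le_of_bowenH_eq_zero fun n => le_antisymm ?_ zero_le
  calc bowenH T Z s ε n ≤ ∑' q, bowenH T (W q) s ε n :=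
        (bowenH_mono hcov).trans (bowenH_iUnion_le W)
    _ = 0 := by simp only [hnull, tsum_zero]

theorem bowenEntropy_le_of_forall_exists_isLimitMeasure (hT : Continuous T) {Z : Set X} {a : ℝ≥0∞}
    (h : ∀ x ∈ Z, ∃ μ, IsLimitMeasure T x μ ∧ ksEntropy T μ ≤ a) : bowenEntropy T Z ≤ a := by
  refine le_of_forall_gt_imp_ge_of_dense fun d hd => iSup₂_le fun ε hε => ?_
  obtain ⟨s, has, hsd⟩ := ENNReal.lt_iff_exists_nnreal_btwn.1 hd
  exact (bowenEntropyRes_le_of_forall_exists_isLimitMeasure hT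
    (fun x hx => (h x hx).imp fun μ hμ => ⟨hμ.1, hμ.2.trans_lt has⟩) hε).trans hsd.le

end Bowen

lemma weakDual_birkhoffAverage_apply {B : Type*} [AddCommMonoid B] [Module ℝ B]
    [TopologicalSpace B] (T : X → X) (Φ : X → WeakDual ℝ B) (n : ℕ) (x : X) (w : B) :
    birkhoffAverage ℝ T Φ n x w = birkhoffAverage ℝ T (fun y => Φ y w) n x :=
  map_birkhoffAverage ℝ ℝ ((topDualPairing ℝ B).flip w) T Φ n x

theorem variational_principle_general {X : Type*} [MetricSpace X] [CompactSpace X]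
    [MeasurableSpace X] [BorelSpace X] {T : X → X} (hT : Continuous T) (hsat : Saturated T)
    {ι : Type*} (f : ι → C(X, ℝ)) (a : ι → ℝ) :
    bowenEntropy T {x | ∀ i, limsup (fun n => birkhoffAverage ℝ T (f i) n x) atTop ≤ a i} =
      ⨆ μ ∈ {μ : Measure X | IsProbabilityMeasure μ ∧ MeasurePreserving T μ μ ∧
        ∀ i, ∫ x, f i x ∂μ ≤ a i}, ksEntropy T μ := by
  apply le_antisymm
  · refine bowenEntropy_le_of_forall_exists_isLimitMeasure hT fun x hx => ?_
    obtain ⟨μ, hμ⟩ := exists_isLimitMeasure T x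
    exact ⟨μ, hμ, le_iSup₂_of_le μ ⟨hμ.isProbabilityMeasure, hμ.measurePreserving hT,
      fun i => (hμ.integral_le_limsup (f i)).trans (hx i)⟩ le_rfl⟩
  · refine iSup₂_le fun μ ⟨hprob, hinv, hμ⟩ => ?_
    rw [← hsat μ hprob hinv]
    exact bowenEntropy_mono fun x (hx : IsGeneric T μ x) i =>
      (hx.tendsto_birkhoffAverage (f i)).limsup_eq.trans_le (hμ i)

/-- **Theorem 1.2 (b).** Variational principle for saturated systems: if
`M_Φ(α;E) ≠ ∅`, then `h_top(X_Φ(α;E)) = sup { h_μ : μ ∈ M_Φ(α;E) }`. -/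
theorem variational_principle {X : Type*} [MetricSpace X] [CompactSpace X]
    [MeasurableSpace X] [BorelSpace X] (T : X → X) (hT : Continuous T) (hsat : Saturated T)
    {B : Type*} [NormedAddCommGroup B] [NormedSpace ℝ B] [CompleteSpace B]
    (Φ : X → WeakDual ℝ B) (hΦ : Continuous Φ) (E : Set B) (α : WeakDual ℝ B)
    (hM : {μ : Measure X | IsProbabilityMeasure μ ∧ MeasurePreserving T μ μ ∧
        ∀ w ∈ E, (∫ x, Φ x w ∂μ) ≤ α w}.Nonempty) :
    bowenEntropy T {x : X | ∀ w ∈ E,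
        Filter.limsup (fun n : ℕ =>
          (((n : ℝ)⁻¹ • ∑ j ∈ Finset.range n, Φ (T^[j] x)) : WeakDual ℝ B) w)
          Filter.atTop ≤ α w} =
      ⨆ μ ∈ {μ : Measure X | IsProbabilityMeasure μ ∧ MeasurePreserving T μ μ ∧
        ∀ w ∈ E, (∫ x, Φ x w ∂μ) ≤ α w}, ksEntropy T μ := by
  have h := variational_principle_general hT hsat
    (fun w : E => ⟨fun x => Φ x w, (WeakDual.eval_continuous (w : B)).comp hΦ⟩) fun w => α w
  simp only [ContinuousMap.coe_mk, ← weakDual_birkhoffAverage_apply, SetCoe.forall] at h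
  exact h
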